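/- arXiv:2411.08775 — 2 statements merged into one kernel-verified Lean document; each statement's English description precedes it below -/
import Mathlib

section
/- For every natural number m, the predicate on pairs (V, V′) of m×m integer matrices asserting 'V and V′ are symmetric, unimodular, positive definite, and congruent over ℤ' is decidable in the computability-theoretic sense: it is a ComputablePred with respect to the canonical encoding of integer matrices (the Primcodable instance on Fin m → Fin m → ℤ). That is, there exists an algorithm that takes as input two integral, positive definite, symmetric, unimodular matrices and outputs whether or not they are congruent over ℤ. -/
open Matrix

namespace PDC

lemma encode_ofNat (n : ℕ) : Encodable.encode (Int.ofNat n) = 2 * n := by rfl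
lemma encode_negSucc (n : ℕ) : Encodable.encode (Int.negSucc n) = 2 * n + 1 := by rfl

lemma pr_subNat : Primrec₂ (fun a b : ℕ => ((a : ℤ) - (b : ℤ))) := by
  refine Primrec₂.encode_iff.1 ?_
  have h : Primrec (fun p : ℕ × ℕ => if p.2 ≤ p.1 then 2 * (p.1 - p.2)
      else 2 * (p.2 - p.1 - 1) + 1) :=
    Primrec.ite (Primrec.nat_le.comp Primrec.snd Primrec.fst)
      (Primrec.nat_double.comp (Primrec.nat_sub.comp Primrec.fst Primrec.snd))
      (Primrec.nat_double_succ.comp (Primrec.nat_sub.comp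
        (Primrec.nat_sub.comp Primrec.snd Primrec.fst) (Primrec.const 1)))
  refine (Primrec.to₂ (h.of_eq (g := fun p : ℕ × ℕ =>
    Encodable.encode ((p.1 : ℤ) - (p.2 : ℤ))) ?_))
  rintro ⟨a, b⟩
  dsimp only
  split_ifs with hab
  · rw [← encode_ofNat]; congr 1; simp; omega
  · rw [← encode_negSucc]; congr 1; rw [Int.negSucc_eq]; omega

lemma pr_pos : Primrec (fun z : ℤ => z.toNat) := by
  have h : Primrec (fun z : ℤ => if Encodable.encode z % 2 = 0 then
      Encodable.encode z / 2 else 0) :=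
    Primrec.ite (Primrec.eq.comp (Primrec.nat_mod.comp Primrec.encode (Primrec.const 2))
        (Primrec.const 0))
      (Primrec.nat_div.comp Primrec.encode (Primrec.const 2)) (Primrec.const 0)
  refine h.of_eq ?_
  rintro (n | n)
  · rw [encode_ofNat]; simp
  · rw [encode_negSucc, if_neg (by omega)]; simp

lemma pr_neg : Primrec (fun z : ℤ => (-z).toNat) := by
  have h : Primrec (fun z : ℤ => if Encodable.encode z % 2 = 0 then 0 else
      Encodable.encode z / 2 + 1) :=
    Primrec.ite (Primrec.eq.comp (Primrec.nat_mod.comp Primrec.encode (Primrec.const 2))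
        (Primrec.const 0)) (Primrec.const 0)
      (Primrec.succ.comp (Primrec.nat_div.comp Primrec.encode (Primrec.const 2)))
  refine h.of_eq ?_
  rintro (n | n)
  · rw [encode_ofNat]; simp
  · rw [encode_negSucc, if_neg (by omega)]; simp; omega

variable {α : Type*} [Primcodable α]

lemma pr_natAbs {f : α → ℤ} (hf : Primrec f) : Primrec (fun a => (f a).natAbs) :=
  (Primrec.nat_add.comp (pr_pos.comp hf) (pr_neg.comp hf)).of_eq fun a => by omega

lemma pr_cast {f : α → ℕ} (hf : Primrec f) : Primrec (fun a => (f a : ℤ)) :=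
  (pr_subNat.comp hf (Primrec.const 0)).of_eq fun a => by simp

lemma pr_add {f g : α → ℤ} (hf : Primrec f) (hg : Primrec g) :
    Primrec (fun a => f a + g a) :=
  (pr_subNat.comp (Primrec.nat_add.comp (pr_pos.comp hf) (pr_pos.comp hg))
    (Primrec.nat_add.comp (pr_neg.comp hf) (pr_neg.comp hg))).of_eq fun a => by omega

lemma pr_sub {f g : α → ℤ} (hf : Primrec f) (hg : Primrec g) :
    Primrec (fun a => f a - g a) :=
  (pr_subNat.comp (Primrec.nat_add.comp (pr_pos.comp hf) (pr_neg.comp hg))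
    (Primrec.nat_add.comp (pr_neg.comp hf) (pr_pos.comp hg))).of_eq fun a => by omega

lemma pr_mul {f g : α → ℤ} (hf : Primrec f) (hg : Primrec g) :
    Primrec (fun a => f a * g a) :=
  (pr_subNat.comp
    (Primrec.nat_add.comp (Primrec.nat_mul.comp (pr_pos.comp hf) (pr_pos.comp hg))
      (Primrec.nat_mul.comp (pr_neg.comp hf) (pr_neg.comp hg)))
    (Primrec.nat_add.comp (Primrec.nat_mul.comp (pr_pos.comp hf) (pr_neg.comp hg))
      (Primrec.nat_mul.comp (pr_neg.comp hf) (pr_pos.comp hg)))).of_eq fun a => by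
    have h1 : f a = ((f a).toNat : ℤ) - ((-f a).toNat : ℤ) := by omega
    have h2 : g a = ((g a).toNat : ℤ) - ((-g a).toNat : ℤ) := by omega
    conv_rhs => rw [h1, h2]
    push_cast
    ring

lemma pr_sum {ι : Type*} (s : Finset ι) {f : ι → α → ℤ} (hf : ∀ i, Primrec (f i)) :
    Primrec (fun a => ∑ i ∈ s, f i a) := by
  classical
  induction s using Finset.induction_on with
  | empty => simpa using Primrec.const 0
  | insert i s hi ih => simpa [Finset.sum_insert hi] using pr_add (hf i) ih

lemma pr_prod {ι : Type*} (s : Finset ι) {f : ι → α → ℤ} (hf : ∀ i, Primrec (f i)) :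
    Primrec (fun a => ∏ i ∈ s, f i a) := by
  classical
  induction s using Finset.induction_on with
  | empty => simpa using Primrec.const 1
  | insert i s hi ih => simpa [Finset.prod_insert hi] using pr_mul (hf i) ih

lemma pr_all {ι : Type*} (s : Finset ι) {p : ι → α → Prop} (hp : ∀ i, PrimrecPred (p i)) :
    PrimrecPred (fun a => ∀ i ∈ s, p i a) := by
  classical
  induction s using Finset.induction_on with
  | empty =>
    exact (Primrec.eq.comp (Primrec.const (α := α) 0) (Primrec.const 0)).of_eq (by simp)
  | insert i s hi ih => exact ((hp i).and ih).of_eq (by simp)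

lemma pr_det {m : ℕ} {M : α → Matrix (Fin m) (Fin m) ℤ}
    (h : ∀ i j, Primrec (fun a => M a i j)) : Primrec (fun a => (M a).det) := by
  simp only [det_apply']
  exact pr_sum _ fun σ => pr_mul (Primrec.const _) (pr_prod _ fun i => h _ _)

lemma pr_adj {m : ℕ} {M : α → Matrix (Fin m) (Fin m) ℤ}
    (h : ∀ i j, Primrec (fun a => M a i j)) (i j : Fin m) :
    Primrec (fun a => (M a).adjugate i j) := by
  simp only [adjugate_apply]
  refine pr_det fun k l => ?_
  by_cases hk : k = j
  · subst hk
    simpa using Primrec.const _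
  · simpa [updateRow_ne hk] using h k l

lemma pr_mv {ι : Type*} (q : MvPolynomial ι ℤ) {x : α → ι → ℤ}
    (h : ∀ i, Primrec (fun a => x a i)) : Primrec (fun a => MvPolynomial.eval (x a) q) := by
  induction q using MvPolynomial.induction_on with
  | C c => simpa using Primrec.const c
  | add p q hp hq => simpa using pr_add hp hq
  | mul_X p i hp => simpa using pr_mul hp (h i)

lemma pr_charpoly {m : ℕ} {M : α → Matrix (Fin m) (Fin m) ℤ}
    (h : ∀ i j, Primrec (fun a => M a i j)) (k : ℕ) :
    Primrec (fun a => (M a).charpoly.coeff k) := by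
  refine (pr_mv ((charpoly.univ ℤ (Fin m)).coeff k) (x := fun a p => M a p.1 p.2)
    fun p => h _ _).of_eq fun a => ?_
  have := charpoly.univ_coeff_eval₂Hom (Fin m) (RingHom.id ℤ) (fun p => M a p.1 p.2) k
  exact this

lemma pr_mulEntry {m : ℕ} {M N : α → Matrix (Fin m) (Fin m) ℤ}
    (h : ∀ i j, Primrec (fun a => M a i j)) (h' : ∀ i j, Primrec (fun a => N a i j))
    (i j : Fin m) : Primrec (fun a => (M a * N a) i j) := by
  simp only [mul_apply]
  exact pr_sum _ fun k => pr_mul (h _ _) (h' _ _)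

lemma posDef_iff {m : ℕ} (V : Matrix (Fin m) (Fin m) ℤ) (hs : V.IsSymm)
    (hd : IsUnit V.det) :
    (V.map ((↑) : ℤ → ℝ)).PosDef ↔ ∀ k ∈ Finset.range (m + 1), 0 ≤ (-V).charpoly.coeff k := by
  set A := V.map ((↑) : ℤ → ℝ) with hA
  have hH : A.IsHermitian := by
    ext i j
    simp [hA, hs.apply i j]
  have hdet : A.det ≠ 0 := by
    have : A.det = (V.det : ℝ) := ((Int.castRingHom ℝ).map_det V).symm
    rw [this]
    exact_mod_cast hd.ne_zero
  have hcp : (-A).charpoly = (-V).charpoly.map (Int.castRingHom ℝ) := by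
    rw [← charpoly_map]
    congr 1
    ext i j
    simp [hA]
  constructor
  · intro hP
    have hN : (-A).IsHermitian := hH.neg
    have hmu : ∀ i, hN.eigenvalues i ≤ 0 := by
      intro i
      rw [hN.eigenvalues_eq]
      have := hP.posSemidef.dotProduct_mulVec_nonneg (hN.eigenvectorBasis i)
      simp [neg_mulVec]
      simpa using this
    have hall : ∀ s : Finset (Fin m), ∀ k, 0 ≤ (∏ i ∈ s, (Polynomial.X -
        Polynomial.C (hN.eigenvalues i))).coeff k := by
      intro s
      induction s using Finset.induction_on with
      | empty => intro k; simp [Polynomial.coeff_one]; split_ifs <;> simp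
      | insert i s hi ih =>
        intro k
        rw [Finset.prod_insert hi, sub_mul, Polynomial.coeff_sub, Polynomial.coeff_C_mul]
        have h2 := mul_nonneg (neg_nonneg.2 (hmu i)) (ih k)
        cases k with
        | zero => simp; linarith
        | succ k =>
          rw [Polynomial.coeff_X_mul]
          have := ih k
          linarith
    intro k _
    have h1 := hall Finset.univ k
    have h2 := hN.charpoly_eq
    simp only [RCLike.ofReal_real_eq_id, id] at h2
    rw [← h2, hcp, Polynomial.coeff_map] at h1
    simpa using h1
  · intro hk
    rw [hH.posDef_iff_eigenvalues_pos]
    intro i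
    by_contra hlt
    push Not at hlt
    set l := hH.eigenvalues i with hl
    have h0 : (scalar (Fin m) l - A).det = 0 := by
      rw [← eval_charpoly, hH.charpoly_eq, Polynomial.eval_prod]
      exact Finset.prod_eq_zero (Finset.mem_univ i) (by simp [hl])
    have h1 : (-A).charpoly.eval (-l) = 0 := by
      rw [eval_charpoly]
      have : scalar (Fin m) (-l) - -A = -(scalar (Fin m) l - A) := by
        rw [map_neg]; abel
      rw [this, det_neg, h0, mul_zero]
    rcases hlt.lt_or_eq with hlt | heq
    · have hdeg : (-A).charpoly.natDegree = m := by
        rw [charpoly_natDegree_eq_dim]; simp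
      rw [Polynomial.eval_eq_sum_range, hdeg] at h1
      have hnn : ∀ k ∈ Finset.range (m + 1), 0 ≤ (-A).charpoly.coeff k * (-l) ^ k := by
        intro k hkm
        have := hk k hkm
        refine mul_nonneg ?_ (pow_nonneg (by linarith) _)
        rw [hcp, Polynomial.coeff_map]
        simpa using this
      have := (Finset.sum_eq_zero_iff_of_nonneg hnn).1 h1 m (by simp)
      have hm : (-A).charpoly.coeff m = 1 := by
        have := (charpoly_monic (-A)).coeff_natDegree
        rwa [hdeg] at this
      rw [hm, one_mul] at this
      exact absurd this (pow_ne_zero _ (by linarith))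
    · rw [heq] at h0
      rw [map_zero, zero_sub, det_neg] at h0
      simp at h0
      exact hdet h0

lemma nonneg_int {m : ℕ} {V : Matrix (Fin m) (Fin m) ℤ}
    (hP : (V.map ((↑) : ℤ → ℝ)).PosDef) (x : Fin m → ℤ) : 0 ≤ x ⬝ᵥ (V *ᵥ x) := by
  have := hP.posSemidef.dotProduct_mulVec_nonneg (fun i => (x i : ℝ))
  have h2 : star (fun i => (x i : ℝ)) ⬝ᵥ (V.map ((↑) : ℤ → ℝ) *ᵥ (fun i => (x i : ℝ)))
      = ((x ⬝ᵥ (V *ᵥ x) : ℤ) : ℝ) := by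
    simp [dotProduct, mulVec]
  rw [h2] at this
  exact_mod_cast this

lemma entry_bound {m : ℕ} {V : Matrix (Fin m) (Fin m) ℤ} (hs : V.IsSymm) (hd : IsUnit V.det)
    (hP : (V.map ((↑) : ℤ → ℝ)).PosDef) (x : Fin m → ℤ) (i : Fin m) :
    |x i| ≤ |x ⬝ᵥ (V *ᵥ x)| + |V.adjugate i i| := by
  -- `y` satisfies `V y = e_i`
  set y : Fin m → ℤ := V.det • (V.adjugate *ᵥ Pi.single i 1) with hy
  have hdd : V.det * V.det = 1 := Int.isUnit_mul_self hd
  have hVy : V *ᵥ y = Pi.single i 1 := by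
    rw [hy, mulVec_smul, mulVec_mulVec, mul_adjugate, smul_mulVec, one_mulVec, smul_smul, hdd,
      one_smul]
  have hyi : y i = V.det * V.adjugate i i := by
    simp [hy]
  have hab : |y i| = |V.adjugate i i| := by
    rw [hyi, abs_mul, Int.isUnit_iff_abs_eq.1 hd, one_mul]
  have hyVx : y ⬝ᵥ (V *ᵥ x) = x i := by
    rw [dotProduct_mulVec, ← mulVec_transpose, hs.eq, hVy]
    simp
  have hxVy : x ⬝ᵥ (V *ᵥ y) = x i := by rw [hVy]; simp
  have hyVy : y ⬝ᵥ (V *ᵥ y) = y i := by rw [hVy]; simp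
  have h1 := nonneg_int hP (x + y)
  have h2 := nonneg_int hP (x - y)
  rw [mulVec_add, add_dotProduct, dotProduct_add, dotProduct_add, hyVx, hxVy, hyVy] at h1
  rw [mulVec_sub, sub_dotProduct, dotProduct_sub, dotProduct_sub, hyVx, hxVy, hyVy] at h2
  rw [← hab]
  have h3 := le_abs_self (x ⬝ᵥ (V *ᵥ x))
  have h4 := le_abs_self (y i)
  have h5 := abs_nonneg (x ⬝ᵥ (V *ᵥ x))
  have h6 := abs_nonneg (y i)
  rw [abs_le]
  constructor <;> linarith

/-- The search bound. -/
def bd (m : ℕ) (p : (Fin m → Fin m → ℤ) × (Fin m → Fin m → ℤ)) : ℕ :=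
  (∑ i, ((p.2 i i).natAbs : ℤ) + ∑ i, (((Matrix.of p.1).adjugate i i).natAbs : ℤ)).natAbs

/-- The `n`-th candidate matrix with entries bounded by `B`. -/
def cand (m B n : ℕ) : Matrix (Fin m) (Fin m) ℤ := Matrix.of fun i j =>
  ((n / (2 * B + 1) ^ (finProdFinEquiv (i, j) : ℕ) % (2 * B + 1) : ℕ) : ℤ) - (B : ℤ)

lemma cand_surj (m B : ℕ) (P : Matrix (Fin m) (Fin m) ℤ) (h : ∀ i j, |P i j| ≤ B) :
    ∃ n < (2 * B + 1) ^ (m * m), cand m B n = P := by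
  let g : Fin (m * m) → Fin (2 * B + 1) := fun k =>
    ⟨(P (finProdFinEquiv.symm k).1 (finProdFinEquiv.symm k).2 + B).toNat, by
      have := abs_le.1 (h (finProdFinEquiv.symm k).1 (finProdFinEquiv.symm k).2)
      omega⟩
  refine ⟨finFunctionFinEquiv g, (finFunctionFinEquiv g).2, ?_⟩
  ext i j
  have h1 : (finFunctionFinEquiv.symm (finFunctionFinEquiv g)) (finProdFinEquiv (i, j))
      = g (finProdFinEquiv (i, j)) := by rw [Equiv.symm_apply_apply]
  have h2 := congrArg Fin.val h1
  have h3 : (finFunctionFinEquiv g : ℕ) / (2 * B + 1) ^ (finProdFinEquiv (i, j) : ℕ)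
      % (2 * B + 1) = (g (finProdFinEquiv (i, j)) : ℕ) := h2
  have h4 : (g (finProdFinEquiv (i, j)) : ℕ) = (P i j + B).toNat := by simp [g]
  have := abs_le.1 (h i j)
  simp only [cand, of_apply]
  rw [h3, h4]
  omega

lemma pr_pow {f g : α → ℕ} (hf : Primrec f) (hg : Primrec g) :
    Primrec (fun a => f a ^ g a) :=
  (Primrec₂.unpaired'.1 Nat.Primrec.pow).comp hf hg

lemma pr_fst {m : ℕ} (i j : Fin m) :
    Primrec (fun p : (Fin m → Fin m → ℤ) × (Fin m → Fin m → ℤ) => p.1 i j) :=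
  Primrec.fin_app.comp (Primrec.fin_app.comp Primrec.fst (Primrec.const i)) (Primrec.const j)

lemma pr_snd {m : ℕ} (i j : Fin m) :
    Primrec (fun p : (Fin m → Fin m → ℤ) × (Fin m → Fin m → ℤ) => p.2 i j) :=
  Primrec.fin_app.comp (Primrec.fin_app.comp Primrec.snd (Primrec.const i)) (Primrec.const j)

lemma pr_bd (m : ℕ) : Primrec (bd m) :=
  pr_natAbs (pr_add (pr_sum _ fun i => pr_cast (pr_natAbs (pr_snd i i)))
    (pr_sum _ fun i => pr_cast (pr_natAbs (pr_adj (fun k l => pr_fst k l) i i))))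

lemma pr_cand {m : ℕ} {f g : α → ℕ} (hf : Primrec f) (hg : Primrec g) (i j : Fin m) :
    Primrec (fun a => cand m (f a) (g a) i j) := by
  have hK : Primrec (fun a => 2 * f a + 1) := Primrec.nat_double_succ.comp hf
  exact pr_sub (pr_cast (Primrec.nat_mod.comp (Primrec.nat_div.comp hg
    (pr_pow hK (Primrec.const _))) hK)) (pr_cast hf)

lemma pp_eq {f g : α → ℤ} (hf : Primrec f) (hg : Primrec g) :
    PrimrecPred (fun a => f a = g a) := Primrec.eq.comp hf hg

lemma pp_nonneg {f : α → ℤ} (hf : Primrec f) : PrimrecPred (fun a => 0 ≤ f a) :=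
  (Primrec.eq.comp (pr_neg.comp hf) (Primrec.const 0)).of_eq fun a => by omega

lemma pp_mat {m : ℕ} {M N : α → Matrix (Fin m) (Fin m) ℤ}
    (h : ∀ i j, Primrec (fun a => M a i j)) (h' : ∀ i j, Primrec (fun a => N a i j)) :
    PrimrecPred (fun a => M a = N a) :=
  (pr_all Finset.univ fun i => pr_all Finset.univ fun j => pp_eq (h i j) (h' i j)).of_eq
    fun a => by simp [← Matrix.ext_iff]

lemma pp_unit {m : ℕ} {M : α → Matrix (Fin m) (Fin m) ℤ}
    (h : ∀ i j, Primrec (fun a => M a i j)) : PrimrecPred (fun a => IsUnit (M a).det) :=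
  (Primrec.eq.comp (pr_natAbs (pr_det h)) (Primrec.const 1)).of_eq
    fun a => Int.isUnit_iff_natAbs_eq.symm

lemma pp_pos {m : ℕ} {M : α → Matrix (Fin m) (Fin m) ℤ}
    (h : ∀ i j, Primrec (fun a => M a i j)) :
    PrimrecPred (fun a => ∀ k ∈ Finset.range (m + 1), 0 ≤ (-M a).charpoly.coeff k) :=
  pr_all _ fun k => pp_nonneg (pr_charpoly (fun i j =>
    (pr_sub (Primrec.const 0) (h i j)).of_eq fun a => by simp) k)

lemma pp_search (m : ℕ) :
    PrimrecPred fun p : (Fin m → Fin m → ℤ) × (Fin m → Fin m → ℤ) =>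
      ∃ n < (2 * bd m p + 1) ^ (m * m), IsUnit (cand m (bd m p) n).det ∧
        Matrix.of p.2 = (cand m (bd m p) n)ᵀ * Matrix.of p.1 * cand m (bd m p) n := by
  have hc : ∀ i j, Primrec (fun q : ℕ × ((Fin m → Fin m → ℤ) × (Fin m → Fin m → ℤ)) =>
      cand m (bd m q.2) q.1 i j) :=
    pr_cand ((pr_bd m).comp Primrec.snd) Primrec.fst
  have hR : PrimrecRel (fun (n : ℕ) (p : (Fin m → Fin m → ℤ) × (Fin m → Fin m → ℤ)) =>
      IsUnit (cand m (bd m p) n).det ∧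
        Matrix.of p.2 = (cand m (bd m p) n)ᵀ * Matrix.of p.1 * cand m (bd m p) n) :=
    PrimrecPred.primrecRel (p := fun q : ℕ × ((Fin m → Fin m → ℤ) × (Fin m → Fin m → ℤ)) =>
      IsUnit (cand m (bd m q.2) q.1).det ∧
        Matrix.of q.2.2 = (cand m (bd m q.2) q.1)ᵀ * Matrix.of q.2.1 * cand m (bd m q.2) q.1)
      ((pp_unit hc).and (pp_mat (fun i j => (pr_snd i j).comp Primrec.snd)
        (pr_mulEntry (pr_mulEntry (fun i j => hc j i)
          (fun i j => (pr_fst i j).comp Primrec.snd)) hc)))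
  have hK : Primrec (fun p => List.range ((2 * bd m p + 1) ^ (m * m))) := Primrec.list_range.comp
    (pr_pow (Primrec.nat_double_succ.comp (pr_bd m)) (Primrec.const (m * m)))
  exact (hR.exists_mem_list.comp hK Primrec.id).of_eq (by simp)

lemma search_iff {m : ℕ} (p : (Fin m → Fin m → ℤ) × (Fin m → Fin m → ℤ))
    (hs : (Matrix.of p.1).IsSymm) (hd : IsUnit (Matrix.of p.1).det)
    (hP : ((Matrix.of p.1).map ((↑) : ℤ → ℝ)).PosDef) :
    (∃ n < (2 * bd m p + 1) ^ (m * m), IsUnit (cand m (bd m p) n).det ∧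
        Matrix.of p.2 = (cand m (bd m p) n)ᵀ * Matrix.of p.1 * cand m (bd m p) n) ↔
    ∃ P : Matrix (Fin m) (Fin m) ℤ, IsUnit P.det ∧
        Matrix.of p.2 = Pᵀ * Matrix.of p.1 * P := by
  constructor
  · rintro ⟨n, _, h⟩
    exact ⟨_, h⟩
  · rintro ⟨P, hu, hE⟩
    have hb : ∀ i j, |P i j| ≤ (bd m p : ℤ) := by
      intro i j
      have h1 := entry_bound hs hd hP (fun k => P k j) i
      have h2 : (fun k => P k j) ⬝ᵥ (Matrix.of p.1 *ᵥ (fun k => P k j)) = p.2 j j := by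
        have : p.2 j j = (Pᵀ * Matrix.of p.1 * P) j j := by rw [← hE]; rfl
        rw [this, Matrix.mul_assoc]
        rfl
      rw [h2] at h1
      have h3 : ((p.2 j j).natAbs : ℤ) ≤ ∑ i, ((p.2 i i).natAbs : ℤ) :=
        Finset.single_le_sum (f := fun i => ((p.2 i i).natAbs : ℤ))
          (fun i _ => by positivity) (Finset.mem_univ j)
      have h4 : (((Matrix.of p.1).adjugate i i).natAbs : ℤ) ≤
          ∑ i, (((Matrix.of p.1).adjugate i i).natAbs : ℤ) :=
        Finset.single_le_sum (f := fun i => (((Matrix.of p.1).adjugate i i).natAbs : ℤ))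
          (fun i _ => by positivity) (Finset.mem_univ i)
      rw [Int.abs_eq_natAbs (p.2 j j), Int.abs_eq_natAbs (adjugate _ _ _)] at h1
      unfold bd
      refine h1.trans ((add_le_add h3 h4).trans ?_)
      exact Int.le_natAbs
    obtain ⟨n, hn, rfl⟩ := cand_surj m _ P hb
    exact ⟨n, hn, hu, hE⟩

end PDC

/-- The predicate "two integer matrices are symmetric, unimodular, positive definite,
and congruent over `ℤ`" is computably decidable. -/
theorem computablePred_posDef_congruent (m : ℕ) :
    ComputablePred fun p : (Fin m → Fin m → ℤ) × (Fin m → Fin m → ℤ) =>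
      (Matrix.of p.1).IsSymm ∧ (Matrix.of p.2).IsSymm ∧
      IsUnit (Matrix.of p.1).det ∧ IsUnit (Matrix.of p.2).det ∧
      ((Matrix.of p.1).map ((↑) : ℤ → ℝ)).PosDef ∧
      ((Matrix.of p.2).map ((↑) : ℤ → ℝ)).PosDef ∧
      ∃ P : Matrix (Fin m) (Fin m) ℤ, IsUnit P.det ∧
        Matrix.of p.2 = Pᵀ * Matrix.of p.1 * P := by
  have h1 := PDC.pr_fst (m := m)
  have h2 := PDC.pr_snd (m := m)
  have key := (PDC.pp_mat (M := fun p : (Fin m → Fin m → ℤ) × (Fin m → Fin m → ℤ) =>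
      (Matrix.of p.1)ᵀ) (N := fun p => Matrix.of p.1) (fun i j => h1 j i) h1).and
    ((PDC.pp_mat (M := fun p : (Fin m → Fin m → ℤ) × (Fin m → Fin m → ℤ) =>
      (Matrix.of p.2)ᵀ) (N := fun p => Matrix.of p.2) (fun i j => h2 j i) h2).and
    ((PDC.pp_unit (M := fun p : (Fin m → Fin m → ℤ) × (Fin m → Fin m → ℤ) =>
      Matrix.of p.1) h1).and
    ((PDC.pp_unit (M := fun p : (Fin m → Fin m → ℤ) × (Fin m → Fin m → ℤ) =>
      Matrix.of p.2) h2).and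
    ((PDC.pp_pos (M := fun p : (Fin m → Fin m → ℤ) × (Fin m → Fin m → ℤ) =>
      Matrix.of p.1) h1).and
    ((PDC.pp_pos (M := fun p : (Fin m → Fin m → ℤ) × (Fin m → Fin m → ℤ) =>
      Matrix.of p.2) h2).and (PDC.pp_search m))))))
  obtain ⟨hdec, hpr⟩ := key.of_eq (q := fun p : (Fin m → Fin m → ℤ) × (Fin m → Fin m → ℤ) =>
      (Matrix.of p.1).IsSymm ∧ (Matrix.of p.2).IsSymm ∧
      IsUnit (Matrix.of p.1).det ∧ IsUnit (Matrix.of p.2).det ∧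
      ((Matrix.of p.1).map ((↑) : ℤ → ℝ)).PosDef ∧
      ((Matrix.of p.2).map ((↑) : ℤ → ℝ)).PosDef ∧
      ∃ P : Matrix (Fin m) (Fin m) ℤ, IsUnit P.det ∧
        Matrix.of p.2 = Pᵀ * Matrix.of p.1 * P) (by
    intro p
    refine and_congr_right fun s1 => and_congr_right fun s2 => and_congr_right fun d1 =>
      and_congr_right fun d2 => ?_
    rw [PDC.posDef_iff _ s1 d1, PDC.posDef_iff _ s2 d2]
    refine and_congr_right fun p1 => and_congr_right fun p2 => ?_
    exact PDC.search_iff p s1 d1 ((PDC.posDef_iff _ s1 d1).2 p1))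
  exact ⟨hdec, hpr.to_comp⟩
end

section
/- For every natural number m, the predicate on pairs (V, V′) of m×m integer matrices asserting 'V and V′ are symmetric, unimodular, indefinite (i.e., for each of them there exist real vectors on which the associated quadratic form is positive and vectors on which it is negative), and congruent over ℤ' is decidable in the computability-theoretic sense: it is a ComputablePred with respect to the canonical encoding of integer matrices. That is, there exists an algorithm that takes as input two integral, symmetric, unimodular, indefinite matrices and outputs whether or not they are congruent over ℤ. -/
open Matrix

theorem enc_int_ofNat (n : ℕ) : Encodable.encode (Int.ofNat n) = 2 * n := rfl
theorem enc_int_negSucc (n : ℕ) : Encodable.encode (Int.negSucc n) = 2 * n + 1 := rfl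

theorem primrec_int_sub : Primrec₂ (fun a b : ℕ => (a : ℤ) - (b : ℤ)) := by
  refine Primrec₂.encode_iff.1 ?_
  have h : Primrec₂ (fun a b : ℕ => if b ≤ a then 2 * (a - b) else 2 * (b - a - 1) + 1) := by
    refine Primrec.ite (PrimrecRel.comp Primrec.nat_le Primrec.snd Primrec.fst) ?_ ?_
    · exact Primrec.nat_double.comp (Primrec.nat_sub.comp Primrec.fst Primrec.snd)
    · exact Primrec.nat_double_succ.comp (Primrec.nat_sub.comp
        (Primrec.nat_sub.comp Primrec.snd Primrec.fst) (Primrec.const 1))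
  refine h.of_eq fun a b => ?_
  split_ifs with hab
  · rw [← enc_int_ofNat]; congr 1; rw [Int.ofNat_eq_natCast]; omega
  · rw [← enc_int_negSucc]; congr 1; omega

theorem primrec_int_of_enc {f : ℤ → ℕ} {g : ℕ → ℕ} (hg : Primrec g)
    (h : ∀ z, g (Encodable.encode z) = f z) : Primrec f :=
  (hg.comp Primrec.encode).of_eq h

theorem primrec_toNat : Primrec Int.toNat := by
  refine primrec_int_of_enc (g := fun n => bif n.bodd then 0 else n.div2)
    (Primrec.cond Primrec.nat_bodd (Primrec.const 0) Primrec.nat_div2) fun z => ?_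
  rcases z with n | n
  · rw [enc_int_ofNat]; simp [Nat.div2_val]
  · rw [enc_int_negSucc]; simp

theorem primrec_neg_toNat : Primrec (fun z : ℤ => (-z).toNat) := by
  refine primrec_int_of_enc (g := fun n => bif n.bodd then n.div2 + 1 else 0)
    (Primrec.cond Primrec.nat_bodd (Primrec.succ.comp Primrec.nat_div2) (Primrec.const 0)) fun z => ?_
  rcases z with n | n
  · rw [enc_int_ofNat]; simp
  · rw [enc_int_negSucc]; simp [Nat.div2_val]

theorem primrec_int_add : Primrec₂ (fun a b : ℤ => a + b) := by
  refine (primrec_int_sub.comp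
    (Primrec.nat_add.comp (primrec_toNat.comp Primrec.fst) (primrec_toNat.comp Primrec.snd))
    (Primrec.nat_add.comp (primrec_neg_toNat.comp Primrec.fst)
      (primrec_neg_toNat.comp Primrec.snd))).of_eq fun p => ?_
  have h1 := Int.toNat_sub_toNat_neg p.1
  have h2 := Int.toNat_sub_toNat_neg p.2
  push_cast
  conv_rhs => rw [← h1, ← h2]
  ring

theorem primrec_int_mul : Primrec₂ (fun a b : ℤ => a * b) := by
  refine (primrec_int_sub.comp
    (Primrec.nat_add.comp
      (Primrec.nat_mul.comp (primrec_toNat.comp Primrec.fst) (primrec_toNat.comp Primrec.snd))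
      (Primrec.nat_mul.comp (primrec_neg_toNat.comp Primrec.fst)
        (primrec_neg_toNat.comp Primrec.snd)))
    (Primrec.nat_add.comp
      (Primrec.nat_mul.comp (primrec_toNat.comp Primrec.fst) (primrec_neg_toNat.comp Primrec.snd))
      (Primrec.nat_mul.comp (primrec_neg_toNat.comp Primrec.fst)
        (primrec_toNat.comp Primrec.snd)))).of_eq fun p => ?_
  have h1 := Int.toNat_sub_toNat_neg p.1
  have h2 := Int.toNat_sub_toNat_neg p.2
  push_cast
  conv_rhs => rw [← h1, ← h2]
  ring

section
variable {α β : Type*} [Primcodable α] [Primcodable β]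

theorem primrec_finset_sum {ι : Type*} (s : Finset ι) {f : ι → α → ℤ}
    (h : ∀ i, Primrec (f i)) : Primrec fun a => ∑ i ∈ s, f i a := by
  classical
  induction s using Finset.induction_on with
  | empty => simpa using Primrec.const 0
  | insert i s hi ih =>
    simp only [Finset.sum_insert hi]
    exact primrec_int_add.comp (h i) ih

theorem primrec_finset_prod {ι : Type*} (s : Finset ι) {f : ι → α → ℤ}
    (h : ∀ i, Primrec (f i)) : Primrec fun a => ∏ i ∈ s, f i a := by
  classical
  induction s using Finset.induction_on with
  | empty => simpa using Primrec.const 1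
  | insert i s hi ih =>
    simp only [Finset.prod_insert hi]
    exact primrec_int_mul.comp (h i) ih

theorem primrecPred_finset_mem [DecidableEq β] (s : Finset β) {f : α → β} (h : Primrec f) :
    PrimrecPred fun a => f a ∈ s := by
  induction s using Finset.induction_on with
  | empty => exact ⟨inferInstance, by simpa using Primrec.const false⟩
  | insert b s hb ih =>
    simp only [Finset.mem_insert]
    exact (Primrec.eq.comp h (Primrec.const b)).or ih

variable {m : ℕ}

theorem primrec_mat_entry {f : α → Fin m → Fin m → ℤ} (h : Primrec f) (i j : Fin m) :
    Primrec fun a => f a i j :=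
  Primrec.fin_app.comp (Primrec.fin_app.comp h (Primrec.const i)) (Primrec.const j)

theorem primrec_mat_mk {f : α → Fin m → Fin m → ℤ} (h : ∀ i j, Primrec fun a => f a i j) :
    Primrec f := by
  have key : ∀ {σ : Type} [Primcodable σ] {g : α → Fin m → σ}, (∀ i, Primrec fun a => g a i) →
      Primrec g := by
    intro σ _ g hg
    refine Primrec.fin_curry.2 ?_
    have := (Primrec.fin_curry₁ (f := fun i a => g a i)).2 hg
    exact this.comp Primrec.snd Primrec.fst
  exact key fun i => key fun j => h i j

theorem primrec_mat_mul {f g : α → Fin m → Fin m → ℤ} (hf : Primrec f) (hg : Primrec g) :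
    Primrec (β := Fin m → Fin m → ℤ) fun a => (Matrix.of (f a) * Matrix.of (g a) : Matrix (Fin m) (Fin m) ℤ) := by
  refine primrec_mat_mk fun i j => ?_
  simp only [Matrix.mul_apply, Matrix.of_apply]
  exact primrec_finset_sum _ fun k =>
    primrec_int_mul.comp (primrec_mat_entry hf _ _) (primrec_mat_entry hg _ _)

theorem primrec_mat_transpose {f : α → Fin m → Fin m → ℤ} (hf : Primrec f) :
    Primrec (β := Fin m → Fin m → ℤ) fun a => ((Matrix.of (f a))ᵀ : Matrix (Fin m) (Fin m) ℤ) :=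
  primrec_mat_mk fun i j => primrec_mat_entry hf j i

theorem primrec_mat_det {f : α → Fin m → Fin m → ℤ} (hf : Primrec f) :
    Primrec fun a => (Matrix.of (f a)).det := by
  simp only [Matrix.det_apply', Matrix.of_apply]
  exact primrec_finset_sum _ fun σ => primrec_int_mul.comp (Primrec.const _)
    (primrec_finset_prod _ fun i => primrec_mat_entry hf _ _)

theorem primrecPred_unit_det {f : α → Fin m → Fin m → ℤ} (hf : Primrec f) :
    PrimrecPred fun a => IsUnit (Matrix.of (f a)).det := by
  simp only [Int.isUnit_iff]
  exact (Primrec.eq.comp (primrec_mat_det hf) (Primrec.const _)).or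
    (Primrec.eq.comp (primrec_mat_det hf) (Primrec.const _))

theorem primrecPred_symm {f : α → Fin m → Fin m → ℤ} (hf : Primrec f) :
    PrimrecPred fun a => (Matrix.of (f a)).IsSymm :=
  Primrec.eq.comp (α := α) (β := Fin m → Fin m → ℤ) (primrec_mat_transpose hf) hf

theorem rePred_exists {R : α → β → Prop} (h : PrimrecPred fun p : α × β => R p.1 p.2) :
    REPred fun a => ∃ b, R a b := by
  classical
  have h' : Primrec₂ fun (a : α) (n : ℕ) =>
      ((Encodable.decode (α := β) n).map fun b => decide (R a b)).getD false := by
    refine Primrec.option_getD.comp (Primrec.option_map (Primrec.decode.comp Primrec.snd) ?_)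
      (Primrec.const false)
    have := h.decide
    exact this.comp (Primrec.pair (Primrec.fst.comp Primrec.fst) Primrec.snd)
  have h2 : Partrec fun a : α => Nat.rfind fun n => Part.some
      (((Encodable.decode (α := β) n).map fun b => decide (R a b)).getD false) :=
    Partrec.rfind h'.to_comp.partrec
  refine h2.dom_re.of_eq fun a => ?_
  refine Nat.rfind_dom.trans ?_
  constructor
  · rintro ⟨n, hn, -⟩
    rcases hd : Encodable.decode (α := β) n with _ | b
    · simp [hd] at hn
    · exact ⟨b, by simpa [hd] using hn⟩
  · rintro ⟨b, hb⟩
    exact ⟨Encodable.encode b, by simpa using hb, fun _ => trivial⟩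
end

theorem exists_primitive_col {n : ℕ} (v : Fin (n + 1) → ℤ) (hv : v ≠ 0) :
    ∃ P : Matrix (Fin (n + 1)) (Fin (n + 1)) ℤ, IsUnit P.det ∧ ∃ k : ℤ, v = k • P.col 0 := by
  classical
  obtain ⟨r, snf⟩ := Submodule.smithNormalForm (Pi.basisFun ℤ (Fin (n + 1)))
    (Submodule.span ℤ {v})
  have hr : r = 1 := by
    have h1 := Module.finrank_eq_card_basis snf.bN
    rw [← (LinearEquiv.toSpanNonzeroSingleton ℤ _ v hv).finrank_eq] at h1
    simpa using h1.symm
  subst hr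
  have hmem : v ∈ Submodule.span ℤ {v} := Submodule.mem_span_singleton_self v
  have h2 : v = (snf.bN.repr ⟨v, hmem⟩ 0 * snf.a 0) • snf.bM (snf.f 0) := by
    have h3 := snf.bN.sum_repr ⟨v, hmem⟩
    have h4 := congrArg Subtype.val h3
    simp only [Fin.sum_univ_one, Submodule.coe_smul, snf.snf] at h4
    rw [mul_smul]
    exact h4.symm
  let e : Fin (n + 1) ≃ Fin (n + 1) := Equiv.swap 0 (snf.f 0)
  let c := snf.bM.reindex e
  refine ⟨(Pi.basisFun ℤ (Fin (n + 1))).toMatrix c, ?_, snf.bN.repr ⟨v, hmem⟩ 0 * snf.a 0, h2.trans ?_⟩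
  · rw [← Module.Basis.det_apply]
    exact Module.Basis.isUnit_det _ _
  · congr 1
    funext i
    simp [Module.Basis.toMatrix_apply, c, e, Matrix.col]

def schurM {n : ℕ} (V : Matrix (Fin (n + 1)) (Fin (n + 1)) ℤ) : Matrix (Fin n) (Fin n) ℤ :=
  Matrix.of fun i j => V 0 0 * V i.succ j.succ - V 0 i.succ * V 0 j.succ

theorem schurM_det {n : ℕ} (V : Matrix (Fin (n + 1)) (Fin (n + 1)) ℤ) (hV : V.IsSymm) :
    V 0 0 * (schurM V).det = V 0 0 ^ n * V.det := by
  let d : Fin (n + 1) → ℤ := Fin.cons 1 fun _ => V 0 0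
  let M : Matrix (Fin (n + 1)) (Fin (n + 1)) ℤ := Matrix.of (Fin.cons (V 0)
    fun i j => V 0 0 * V i.succ j - V 0 i.succ * V 0 j)
  have h1 : M.det = (Matrix.diagonal d * V).det := by
    refine Matrix.det_eq_of_forall_row_eq_smul_add_const (Fin.cons 0 fun i => - V 0 i.succ) 0
      rfl ?_
    intro i j
    refine Fin.cases ?_ (fun i => ?_) i
    · simp [M, d]
    · simp [M, d]; ring
  have h2 : M.det = V 0 0 * (schurM V).det := by
    rw [Matrix.det_succ_column_zero, Fin.sum_univ_succ]
    have : ∀ i : Fin n, M i.succ 0 = 0 := by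
      intro i
      simp [M, hV.apply 0 i.succ]; ring
    have h3 : M.submatrix (Fin.succAbove 0) Fin.succ = schurM V := by
      ext i j; simp [M, schurM]
    simp only [this, h3]
    simp [M]
  rw [← h2, h1, Matrix.det_mul, Matrix.det_diagonal]
  simp [d, Fin.prod_univ_succ]

theorem schurM_symm {n : ℕ} {V : Matrix (Fin (n + 1)) (Fin (n + 1)) ℤ} (hV : V.IsSymm) :
    (schurM V).IsSymm := by
  ext i j
  simp only [schurM, Matrix.transpose_apply, Matrix.of_apply]
  rw [hV.apply i.succ j.succ]; ring

theorem schurM_form {n : ℕ} (V : Matrix (Fin (n + 1)) (Fin (n + 1)) ℤ) (hV : V.IsSymm)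
    (x0 y0 : ℤ) (x y : Fin n → ℤ) :
    V 0 0 * (vecCons x0 x ⬝ᵥ V *ᵥ vecCons y0 y) =
      (V 0 0 * x0 + (fun j : Fin n => V 0 j.succ) ⬝ᵥ x) *
      (V 0 0 * y0 + (fun j : Fin n => V 0 j.succ) ⬝ᵥ y) + x ⬝ᵥ schurM V *ᵥ y := by
  set b : Fin n → ℤ := fun j : Fin n => V 0 j.succ with hb
  let E : Matrix (Fin n) (Fin n) ℤ := Matrix.of fun i j => V i.succ j.succ
  have h1 : V *ᵥ vecCons y0 y = vecCons (V 0 0 * y0 + b ⬝ᵥ y) (y0 • b + E *ᵥ y) := by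
    funext i
    refine Fin.cases ?_ (fun i => ?_) i
    · simp [Matrix.mulVec, dotProduct, Fin.sum_univ_succ, hb]
    · simp [Matrix.mulVec, dotProduct, Fin.sum_univ_succ, hb, E, hV.apply 0 i.succ]; ring
  have h2 : schurM V *ᵥ y = V 0 0 • (E *ᵥ y) - (b ⬝ᵥ y) • b := by
    funext i
    simp only [schurM, Matrix.mulVec, dotProduct, hb, E, Matrix.of_apply, Pi.sub_apply,
      Pi.smul_apply, smul_eq_mul, Finset.mul_sum, Finset.sum_mul, ← Finset.sum_sub_distrib]
    refine Finset.sum_congr rfl fun j _ => ?_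
    ring
  rw [h1, h2]
  simp only [cons_dotProduct_cons, dotProduct_add, dotProduct_sub, dotProduct_smul, smul_eq_mul]
  rw [dotProduct_comm x b]
  ring

theorem exists_small_residue (a c : ℤ) (ha : a ≠ 0) : ∃ t : ℤ, 2 * |a * t + c| ≤ |a| := by
  refine ⟨-(round ((c : ℚ) / a)), ?_⟩
  have h := abs_sub_round ((c : ℚ) / a)
  have ha' : (a : ℚ) ≠ 0 := by exact_mod_cast ha
  have h2 : ((a * -(round ((c : ℚ) / a)) + c : ℤ) : ℚ) = a * ((c : ℚ) / a - round ((c : ℚ) / a)) := by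
    push_cast; field_simp; ring
  have h3 : ((2 * |a * -(round ((c : ℚ) / a)) + c| : ℤ) : ℚ) ≤ ((|a| : ℤ) : ℚ) := by
    push_cast [Int.cast_abs]
    push_cast at h2
    rw [h2, abs_mul]
    nlinarith [abs_nonneg (a : ℚ)]
  exact_mod_cast h3

theorem form_congr {n : ℕ} (V P : Matrix (Fin n) (Fin n) ℤ) (x y : Fin n → ℤ) :
    x ⬝ᵥ (Pᵀ * V * P) *ᵥ y = (P *ᵥ x) ⬝ᵥ V *ᵥ (P *ᵥ y) := by
  rw [← Matrix.mulVec_mulVec, ← Matrix.mulVec_mulVec, Matrix.dotProduct_mulVec,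
    Matrix.vecMul_transpose]

theorem entry_congr {n : ℕ} (V P : Matrix (Fin n) (Fin n) ℤ) (i j : Fin n) :
    (Pᵀ * V * P) i j = P.col i ⬝ᵥ V *ᵥ P.col j := by
  have := form_congr V P (Pi.single i 1) (Pi.single j 1)
  simpa using this

theorem symm_congr {n : ℕ} {V : Matrix (Fin n) (Fin n) ℤ} (P : Matrix (Fin n) (Fin n) ℤ)
    (hV : V.IsSymm) : (Pᵀ * V * P).IsSymm := by
  unfold Matrix.IsSymm at *
  simp [Matrix.transpose_mul, hV, Matrix.mul_assoc]

theorem det_congr {n : ℕ} (V : Matrix (Fin n) (Fin n) ℤ) {P : Matrix (Fin n) (Fin n) ℤ}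
    (hP : IsUnit P.det) : (Pᵀ * V * P).det = V.det := by
  rw [Matrix.det_mul, Matrix.det_mul, Matrix.det_transpose]
  rcases Int.isUnit_iff.1 hP with h | h <;> rw [h] <;> ring

theorem mulVec_ne_zero_of_unit {n : ℕ} {P : Matrix (Fin n) (Fin n) ℤ}
    (hP : IsUnit P.det) {x : Fin n → ℤ} (hx : x ≠ 0) : P *ᵥ x ≠ 0 := by
  intro h
  apply hx
  have : P⁻¹ *ᵥ (P *ᵥ x) = x := by
    rw [Matrix.mulVec_mulVec, Matrix.nonsing_inv_mul _ hP, Matrix.one_mulVec]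
  rw [← this, h, Matrix.mulVec_zero]

theorem hermite_bound (n : ℕ) : ∃ K : ℕ, ∀ V : Matrix (Fin (n + 1)) (Fin (n + 1)) ℤ,
    V.IsSymm → V.det ≠ 0 → ∃ v : Fin (n + 1) → ℤ, v ≠ 0 ∧
      |v ⬝ᵥ V *ᵥ v| ^ (n + 1) ≤ K * |V.det| := by
  induction n with
  | zero =>
    refine ⟨1, fun V hV hd => ⟨fun _ => 1, fun h => by simpa using congrFun h 0, ?_⟩⟩
    simp [Matrix.mulVec, dotProduct]
  | succ n ih =>
    obtain ⟨K, hK⟩ := ih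
    refine ⟨2 ^ (n + 1) * K, fun V hV hd => ?_⟩
    by_cases hiso : ∃ v : Fin (n + 2) → ℤ, v ≠ 0 ∧ v ⬝ᵥ V *ᵥ v = 0
    · obtain ⟨v, hv, h0⟩ := hiso
      exact ⟨v, hv, by rw [h0]; simp; positivity⟩
    · push Not at hiso
      have hne : ({v | v ≠ 0} : Set (Fin (n + 2) → ℤ)).Nonempty :=
        ⟨fun _ => 1, fun h => by simpa using congrFun h 0⟩
      obtain ⟨v, hv, hmin⟩ := exists_minimalFor_of_wellFoundedLT (· ∈ {v | v ≠ 0})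
        (fun v : Fin (n + 2) → ℤ => (v ⬝ᵥ V *ᵥ v).natAbs) hne
      have hmin' : ∀ x : Fin (n + 2) → ℤ, x ≠ 0 → |v ⬝ᵥ V *ᵥ v| ≤ |x ⬝ᵥ V *ᵥ x| := by
        intro x hx
        have := le_total (v ⬝ᵥ V *ᵥ v).natAbs (x ⬝ᵥ V *ᵥ x).natAbs
        have h2 := @hmin x hx
        simp only at h2
        rw [Int.abs_eq_natAbs, Int.abs_eq_natAbs]
        omega
      obtain ⟨P, hP, k, hk⟩ := exists_primitive_col v hv
      set W := Pᵀ * V * P with hW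
      set a := W 0 0 with ha
      have hWs : W.IsSymm := symm_congr P hV
      have hWd : W.det = V.det := det_congr V hP
      have haP : a = P.col 0 ⬝ᵥ V *ᵥ P.col 0 := entry_congr V P 0 0
      have hk0 : k ≠ 0 := by rintro rfl; exact hv (by simpa using hk)
      have hP0 : P.col 0 ≠ 0 := by intro h; rw [h] at hk; exact hv (by simpa using hk)
      have ha0 : a ≠ 0 := by rw [haP]; exact hiso _ hP0
      have hfv : v ⬝ᵥ V *ᵥ v = k ^ 2 * a := by
        rw [hk, haP, Matrix.mulVec_smul, smul_dotProduct, dotProduct_smul]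
        simp only [smul_eq_mul]; ring
      have hav : |a| ≤ |v ⬝ᵥ V *ᵥ v| := by
        rw [hfv, abs_mul]
        have : (1 : ℤ) ≤ |k ^ 2| := Int.one_le_abs (pow_ne_zero 2 hk0)
        nlinarith [abs_nonneg a]
      have hamin : ∀ x : Fin (n + 2) → ℤ, x ≠ 0 → |a| ≤ |x ⬝ᵥ W *ᵥ x| := by
        intro x hx
        rw [hW, form_congr]
        exact hav.trans (hmin' _ (mulVec_ne_zero_of_unit hP hx))
      have hSd := schurM_det W hWs
      rw [← ha, hWd] at hSd
      have hS0 : (schurM W).det ≠ 0 := by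
        intro h
        rw [h, mul_zero] at hSd
        exact (mul_ne_zero (pow_ne_zero _ ha0) hd) hSd.symm
      obtain ⟨x, hx, hxb⟩ := hK (schurM W) (schurM_symm hWs) hS0
      obtain ⟨x0, hx0⟩ := exists_small_residue a ((fun j : Fin (n + 1) => W 0 j.succ) ⬝ᵥ x) ha0
      have hform := schurM_form W hWs x0 x0 x x
      rw [← ha] at hform
      set g := x ⬝ᵥ schurM W *ᵥ x
      set c := a * x0 + (fun j : Fin (n + 1) => W 0 j.succ) ⬝ᵥ x
      have hxx : vecCons x0 x ≠ 0 := by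
        intro h
        apply hx
        funext i
        have := congrFun h i.succ
        simpa using this
      have h1 := hamin _ hxx
      have h2 : |a| ^ 2 ≤ 2 * |g| := by
        have h3 : |a| * |a| ≤ |c * c + g| := by
          rw [← hform, abs_mul]
          exact mul_le_mul_of_nonneg_left h1 (abs_nonneg a)
        have h4 : |c * c + g| ≤ |c| * |c| + |g| := by
          rw [← abs_mul]; exact abs_add_le _ _
        nlinarith [abs_nonneg c, abs_nonneg a, abs_nonneg g]
      refine ⟨P.col 0, hP0, ?_⟩
      rw [← haP]
      have hapos : 0 < |a| := abs_pos.2 ha0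
      have hSd' : |a| * |(schurM W).det| = |a| ^ (n + 1) * |V.det| := by
        rw [← abs_mul, hSd, abs_mul, abs_pow]
      have h5 : (|a| ^ 2) ^ (n + 1) ≤ 2 ^ (n + 1) * (K * |(schurM W).det|) := by
        calc (|a| ^ 2) ^ (n + 1) ≤ (2 * |g|) ^ (n + 1) := pow_le_pow_left₀ (by positivity) h2 _
          _ = 2 ^ (n + 1) * |g| ^ (n + 1) := by rw [mul_pow]
          _ ≤ _ := by gcongr
      have h6 : |a| ^ (n + 1) * |a| ^ (n + 1 + 1) ≤
          |a| ^ (n + 1) * (2 ^ (n + 1) * K * |V.det|) := by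
        calc |a| ^ (n + 1) * |a| ^ (n + 1 + 1) = |a| * (|a| ^ 2) ^ (n + 1) := by ring
          _ ≤ |a| * (2 ^ (n + 1) * (K * |(schurM W).det|)) := by gcongr
          _ = 2 ^ (n + 1) * K * (|a| * |(schurM W).det|) := by ring
          _ = _ := by rw [hSd']; ring
      have h7 := le_of_mul_le_mul_left h6 (by positivity)
      push_cast
      exact h7

theorem exists_bounded_value (n : ℕ) (D : ℕ) : ∃ C : ℕ,
    ∀ V : Matrix (Fin (n + 1)) (Fin (n + 1)) ℤ, V.IsSymm → V.det ≠ 0 → |V.det| ≤ D →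
      ∃ v : Fin (n + 1) → ℤ, v ⬝ᵥ V *ᵥ v ≠ 0 ∧ |v ⬝ᵥ V *ᵥ v| ≤ C := by
  obtain ⟨K, hK⟩ := hermite_bound n
  refine ⟨K * D + 2 * D, fun V hV hd hD => ?_⟩
  obtain ⟨v, hv, hvb⟩ := hK V hV hd
  by_cases h0 : v ⬝ᵥ V *ᵥ v = 0
  · obtain ⟨P, hP, k, hk⟩ := exists_primitive_col v hv
    set W := Pᵀ * V * P with hW
    have hWs : W.IsSymm := symm_congr P hV
    have hWd : W.det = V.det := det_congr V hP
    have hk0 : k ≠ 0 := by rintro rfl; exact hv (by simpa using hk)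
    have haP : W 0 0 = P.col 0 ⬝ᵥ V *ᵥ P.col 0 := entry_congr V P 0 0
    have hW0 : W 0 0 = 0 := by
      rw [hk, Matrix.mulVec_smul, smul_dotProduct, dotProduct_smul, ← haP] at h0
      simpa [hk0] using h0
    have hr : W.row 0 ≠ 0 := by
      intro h
      apply hd
      rw [← hWd]
      exact Matrix.det_eq_zero_of_row_eq_zero 0 fun j => congrFun h j
    obtain ⟨Q, hQ, g, hg⟩ := exists_primitive_col (W.row 0) hr
    have hgd : g ∣ V.det := by
      rw [← hWd, Matrix.det_succ_row_zero]
      refine Finset.dvd_sum fun j _ => ?_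
      have : W 0 j = g * Q j 0 := by simpa using congrFun hg j
      rw [this]
      exact Dvd.dvd.mul_right (Dvd.dvd.mul_left (Dvd.intro _ rfl) _) _
    have hg0 : g ≠ 0 := by rintro rfl; exact hr (by simpa using hg)
    have hgD : |g| ≤ D := by
      refine le_trans ?_ hD
      exact Int.le_of_dvd (abs_pos.2 hd) ((abs_dvd_abs _ _).2 hgd)
    let w : Fin (n + 1) → ℤ := Q⁻¹.row 0
    have hw : W.row 0 ⬝ᵥ w = g := by
      rw [hg, smul_dotProduct, dotProduct_comm]
      have h1 : (Q⁻¹ * Q) 0 0 = 1 := by rw [Matrix.nonsing_inv_mul _ hQ]; simp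
      rw [Matrix.mul_apply] at h1
      simp only [dotProduct, w, Matrix.row_apply, Matrix.col_apply, smul_eq_mul]
      rw [h1, mul_one]
    let e : Fin (n + 1) → ℤ := Pi.single 0 1
    have hval : ∀ t : ℤ, (w + t • e) ⬝ᵥ W *ᵥ (w + t • e) = 2 * g * t + w ⬝ᵥ W *ᵥ w := by
      intro t
      have h1 : e ⬝ᵥ W *ᵥ w = g := by rw [← hw]; simp [e, Matrix.mulVec]; rfl
      have h2 : w ⬝ᵥ W *ᵥ e = g := by
        rw [Matrix.dotProduct_mulVec, ← Matrix.mulVec_transpose, hWs, dotProduct_comm, h1]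
      have h3 : e ⬝ᵥ W *ᵥ e = 0 := by simp [e, hW0]
      rw [Matrix.mulVec_add, Matrix.mulVec_smul, add_dotProduct, dotProduct_add, dotProduct_add,
        smul_dotProduct, smul_dotProduct, dotProduct_smul, dotProduct_smul, h1, h2, h3]
      simp only [smul_eq_mul]; ring
    obtain ⟨t, ht⟩ := exists_small_residue (2 * g) (w ⬝ᵥ W *ᵥ w) (by simpa using hg0)
    have h2g : |2 * g| = 2 * |g| := by rw [abs_mul]; rfl
    have hfin : ∃ x : Fin (n + 1) → ℤ, x ⬝ᵥ W *ᵥ x ≠ 0 ∧ |x ⬝ᵥ W *ᵥ x| ≤ 2 * |g| := by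
      by_cases hz : 2 * g * t + w ⬝ᵥ W *ᵥ w = 0
      · refine ⟨w + (t + 1) • e, ?_⟩
        have : (w + (t + 1) • e) ⬝ᵥ W *ᵥ (w + (t + 1) • e) = 2 * g := by
          rw [hval]; linarith
        rw [this]
        exact ⟨by simpa using hg0, h2g.le⟩
      · refine ⟨w + t • e, ?_⟩
        rw [hval]
        exact ⟨hz, by rw [h2g] at ht; linarith [abs_nonneg g]⟩
    obtain ⟨x, hx0, hx⟩ := hfin
    rw [hW, form_congr] at hx0 hx
    refine ⟨P *ᵥ x, hx0, hx.trans ?_⟩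
    push_cast
    have : (0:ℤ) ≤ K * D := by positivity
    linarith
  · refine ⟨v, h0, ?_⟩
    have h1 : |v ⬝ᵥ V *ᵥ v| ≤ |v ⬝ᵥ V *ᵥ v| ^ (n + 1) :=
      le_self_pow₀ (Int.one_le_abs h0) (by omega)
    have h2 : (K : ℤ) * |V.det| ≤ K * D := by gcongr
    push_cast
    have : (0:ℤ) ≤ D := by positivity
    linarith

def blockR {n : ℕ} (t : Fin n → ℤ) (Q : Matrix (Fin n) (Fin n) ℤ) :
    Matrix (Fin (n + 1)) (Fin (n + 1)) ℤ :=
  (Matrix.of (Fin.cons (vecCons 1 0) fun j => vecCons (t j) (Q.col j)))ᵀ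

theorem blockR_det {n : ℕ} (t : Fin n → ℤ) (Q : Matrix (Fin n) (Fin n) ℤ) :
    (blockR t Q).det = Q.det := by
  rw [Matrix.det_succ_column_zero, Fin.sum_univ_succ]
  have h3 : (blockR t Q).submatrix (Fin.succAbove 0) Fin.succ = Q := by
    ext i j; simp [blockR]
  rw [h3]
  simp [blockR]

theorem finite_classes (m : ℕ) : ∀ D : ℕ, ∃ S : Set (Matrix (Fin m) (Fin m) ℤ), S.Finite ∧
    ∀ V : Matrix (Fin m) (Fin m) ℤ, V.IsSymm → V.det ≠ 0 → |V.det| ≤ D →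
      ∃ P : Matrix (Fin m) (Fin m) ℤ, IsUnit P.det ∧ Pᵀ * V * P ∈ S := by
  induction m with
  | zero => exact fun D => ⟨Set.univ, Set.toFinite _, fun V _ _ _ => ⟨1, by simp, trivial⟩⟩
  | succ n ih =>
    intro D
    obtain ⟨C, hC⟩ := exists_bounded_value n D
    obtain ⟨S, hS, hSV⟩ := ih (C ^ n * D)
    refine ⟨{W | W.IsSymm ∧ W 0 0 ≠ 0 ∧ (∀ j, |W 0 j| ≤ C) ∧ schurM W ∈ S}, ?_, ?_⟩
    · have hfin : ((Set.univ.pi fun _ : Fin (n + 1) => Set.Icc (-(C : ℤ)) C) ×ˢ S).Finite :=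
        (Set.Finite.pi fun _ => Set.finite_Icc _ _).prod hS
      refine Set.Finite.of_injOn (f := fun W => (W 0, schurM W)) ?_ ?_ hfin
      · rintro W ⟨-, -, h1, h2⟩
        exact ⟨fun j _ => abs_le.1 (h1 j), h2⟩
      · rintro W ⟨hs, h0, -, -⟩ W' ⟨hs', -, -, -⟩ heq
        simp only [Prod.mk.injEq] at heq
        obtain ⟨hrow, hsch⟩ := heq
        ext i j
        refine Fin.cases (congrFun hrow j) (fun i => ?_) i
        refine Fin.cases ?_ (fun j => ?_) j
        · rw [hs.apply, hs'.apply]; exact congrFun hrow _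
        · have := congrFun (congrFun hsch i) j
          simp only [schurM, Matrix.of_apply, ← congrFun hrow] at this
          have h3 : W 0 0 * W i.succ j.succ = W 0 0 * W' i.succ j.succ := by linarith
          exact mul_left_cancel₀ h0 h3
    · intro V hV hd hD
      obtain ⟨v, hv0, hvC⟩ := hC V hV hd hD
      have hv : v ≠ 0 := by rintro rfl; simp at hv0
      obtain ⟨P, hP, k, hk⟩ := exists_primitive_col v hv
      set W := Pᵀ * V * P with hW
      set a := W 0 0 with ha
      have hWs : W.IsSymm := symm_congr P hV
      have hWd : W.det = V.det := det_congr V hP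
      have haP : a = P.col 0 ⬝ᵥ V *ᵥ P.col 0 := entry_congr V P 0 0
      have hk0 : k ≠ 0 := by rintro rfl; exact hv (by simpa using hk)
      have hfv : v ⬝ᵥ V *ᵥ v = k ^ 2 * a := by
        rw [hk, haP, Matrix.mulVec_smul, smul_dotProduct, dotProduct_smul]
        simp only [smul_eq_mul]; ring
      have ha0 : a ≠ 0 := by rintro h; rw [hfv, h] at hv0; simp at hv0
      have haC : |a| ≤ C := by
        refine le_trans ?_ hvC
        rw [hfv, abs_mul]
        have : (1 : ℤ) ≤ |k ^ 2| := Int.one_le_abs (pow_ne_zero 2 hk0)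
        nlinarith [abs_nonneg a]
      have hSd := schurM_det W hWs
      rw [← ha, hWd] at hSd
      have hS0 : (schurM W).det ≠ 0 := by
        intro h
        rw [h, mul_zero] at hSd
        exact (mul_ne_zero (pow_ne_zero _ ha0) hd) hSd.symm
      have hSb : |(schurM W).det| ≤ (C ^ n * D : ℕ) := by
        have h1 : |a| * |(schurM W).det| = |a| ^ n * |V.det| := by
          rw [← abs_mul, hSd, abs_mul, abs_pow]
        have h2 : |a| ^ n * |V.det| ≤ (C : ℤ) ^ n * D := by gcongr
        have h3 : (1 : ℤ) ≤ |a| := Int.one_le_abs ha0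
        push_cast
        nlinarith [abs_nonneg (schurM W).det]
      obtain ⟨Q, hQ, hQS⟩ := hSV (schurM W) (schurM_symm hWs) hS0 hSb
      let b : Fin n → ℤ := fun j => W 0 j.succ
      choose t ht using fun j : Fin n => exists_small_residue a (b ⬝ᵥ Q.col j) ha0
      let R := blockR t Q
      have hR : IsUnit R.det := by rw [blockR_det]; exact hQ
      have hR0 : R.col 0 = vecCons 1 0 := rfl
      have hRs : ∀ j : Fin n, R.col j.succ = vecCons (t j) (Q.col j) := fun j => rfl
      have e1 : (Rᵀ * W * R) 0 0 = a := by
        have := schurM_form W hWs 1 1 0 0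
        rw [entry_congr, hR0]
        refine mul_left_cancel₀ ha0 ?_
        rw [← ha] at this
        rw [this]; simp
      have e2 : ∀ j : Fin n, (Rᵀ * W * R) 0 j.succ = a * t j + b ⬝ᵥ Q.col j := by
        intro j
        have := schurM_form W hWs 1 (t j) 0 (Q.col j)
        rw [entry_congr, hR0, hRs]
        refine mul_left_cancel₀ ha0 ?_
        rw [← ha] at this
        rw [this]; simp [b]
      have e3 : ∀ i j : Fin n, a * (Rᵀ * W * R) i.succ j.succ =
          (a * t i + b ⬝ᵥ Q.col i) * (a * t j + b ⬝ᵥ Q.col j) + (Qᵀ * schurM W * Q) i j := by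
        intro i j
        rw [entry_congr, entry_congr, hRs, hRs]
        exact schurM_form W hWs (t i) (t j) (Q.col i) (Q.col j)
      refine ⟨P * R, by rw [Matrix.det_mul]; exact hP.mul hR, ?_⟩
      have e0 : (P * R)ᵀ * V * (P * R) = Rᵀ * W * R := by
        rw [hW, Matrix.transpose_mul]; simp only [Matrix.mul_assoc]
      rw [e0]
      refine ⟨symm_congr R hWs, by rw [e1]; exact ha0, fun j => ?_, ?_⟩
      · refine Fin.cases (by rw [e1]; exact haC) (fun j => ?_) j
        rw [e2]
        have := ht j
        linarith [abs_nonneg (a * t j + b ⬝ᵥ Q.col j)]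
      · have : schurM (Rᵀ * W * R) = Qᵀ * schurM W * Q := by
          ext i j
          change (Rᵀ * W * R) 0 0 * (Rᵀ * W * R) i.succ j.succ -
            (Rᵀ * W * R) 0 i.succ * (Rᵀ * W * R) 0 j.succ = _
          rw [e1, e3, e2, e2]; ring
        rw [this]; exact hQS

abbrev MatF (m : ℕ) := Fin m → Fin m → ℤ

/-- The predicate of the main theorem. -/
def mainP (m : ℕ) (V V' : Matrix (Fin m) (Fin m) ℤ) : Prop :=
  V.IsSymm ∧ V'.IsSymm ∧ IsUnit V.det ∧ IsUnit V'.det ∧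
      (∃ x : Fin m → ℝ, 0 < x ⬝ᵥ (V.map ((↑) : ℤ → ℝ)).mulVec x) ∧
      (∃ y : Fin m → ℝ, y ⬝ᵥ (V.map ((↑) : ℤ → ℝ)).mulVec y < 0) ∧
      (∃ x : Fin m → ℝ, 0 < x ⬝ᵥ (V'.map ((↑) : ℤ → ℝ)).mulVec x) ∧
      (∃ y : Fin m → ℝ, y ⬝ᵥ (V'.map ((↑) : ℤ → ℝ)).mulVec y < 0) ∧
      ∃ P : Matrix (Fin m) (Fin m) ℤ, IsUnit P.det ∧ V' = Pᵀ * V * P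

theorem congr_inv {m : ℕ} (V : Matrix (Fin m) (Fin m) ℤ) {P : Matrix (Fin m) (Fin m) ℤ}
    (hP : IsUnit P.det) : (P⁻¹)ᵀ * (Pᵀ * V * P) * P⁻¹ = V := by
  have h1 : P * P⁻¹ = 1 := Matrix.mul_nonsing_inv P hP
  have h2 : (P⁻¹)ᵀ * Pᵀ = 1 := by rw [← Matrix.transpose_mul, h1, Matrix.transpose_one]
  calc (P⁻¹)ᵀ * (Pᵀ * V * P) * P⁻¹ = ((P⁻¹)ᵀ * Pᵀ) * V * (P * P⁻¹) := by
        simp only [Matrix.mul_assoc]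
    _ = V := by rw [h1, h2, Matrix.one_mul, Matrix.mul_one]

theorem real_form_congr {m : ℕ} (V : Matrix (Fin m) (Fin m) ℤ) {P : Matrix (Fin m) (Fin m) ℤ}
    (hP : IsUnit P.det) (x : Fin m → ℝ) : ∃ y : Fin m → ℝ,
      y ⬝ᵥ ((Pᵀ * V * P).map ((↑) : ℤ → ℝ)).mulVec y = x ⬝ᵥ (V.map ((↑) : ℤ → ℝ)).mulVec x := by
  have hmap : ∀ A B : Matrix (Fin m) (Fin m) ℤ, (A * B).map ((↑) : ℤ → ℝ) =
      A.map ((↑) : ℤ → ℝ) * B.map ((↑) : ℤ → ℝ) := fun A B =>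
    Matrix.map_mul (f := Int.castRingHom ℝ)
  refine ⟨(P⁻¹).map ((↑) : ℤ → ℝ) *ᵥ x, ?_⟩
  have h := congrArg (fun M => x ⬝ᵥ (M.map ((↑) : ℤ → ℝ)) *ᵥ x) (congr_inv V hP)
  rw [← h, hmap _ (P⁻¹), hmap ((P⁻¹)ᵀ), ← Matrix.mulVec_mulVec, ← Matrix.mulVec_mulVec,
    Matrix.transpose_map]
  rw [Matrix.dotProduct_mulVec x, Matrix.vecMul_transpose]

theorem mainP_congr {m : ℕ} {V V' P Q : Matrix (Fin m) (Fin m) ℤ} (hP : IsUnit P.det)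
    (hQ : IsUnit Q.det) (h : mainP m V V') : mainP m (Pᵀ * V * P) (Qᵀ * V' * Q) := by
  obtain ⟨h1, h2, h3, h4, ⟨x1, h5⟩, ⟨x2, h6⟩, ⟨x3, h7⟩, ⟨x4, h8⟩, R, hR, h9⟩ := h
  refine ⟨symm_congr P h1, symm_congr Q h2, by rwa [det_congr V hP], by rwa [det_congr V' hQ],
    ?_, ?_, ?_, ?_, P⁻¹ * R * Q, ?_, ?_⟩
  · obtain ⟨y, hy⟩ := real_form_congr V hP x1; exact ⟨y, by rwa [hy]⟩
  · obtain ⟨y, hy⟩ := real_form_congr V hP x2; exact ⟨y, by rwa [hy]⟩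
  · obtain ⟨y, hy⟩ := real_form_congr V' hQ x3; exact ⟨y, by rwa [hy]⟩
  · obtain ⟨y, hy⟩ := real_form_congr V' hQ x4; exact ⟨y, by rwa [hy]⟩
  · rw [Matrix.det_mul, Matrix.det_mul]
    exact ((Matrix.isUnit_nonsing_inv_det P hP).mul hR).mul hQ
  · rw [h9]
    conv_lhs => rw [← congr_inv V hP]
    simp only [Matrix.transpose_mul, Matrix.mul_assoc]

theorem mainP_congr_iff {m : ℕ} {V V' P Q : Matrix (Fin m) (Fin m) ℤ} (hP : IsUnit P.det)
    (hQ : IsUnit Q.det) : mainP m (Pᵀ * V * P) (Qᵀ * V' * Q) ↔ mainP m V V' := by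
  refine ⟨fun h => ?_, mainP_congr hP hQ⟩
  have := mainP_congr (Matrix.isUnit_nonsing_inv_det P hP) (Matrix.isUnit_nonsing_inv_det Q hQ) h
  rwa [congr_inv V hP, congr_inv V' hQ] at this

/-- Membership of the pair of transformed matrices in a finite set. -/
def transT (m : ℕ) (T : Finset (MatF m × MatF m)) (p : MatF m × MatF m)
    (q : MatF m × MatF m) : Prop :=
  (IsUnit (Matrix.of q.1).det ∧ IsUnit (Matrix.of q.2).det) ∧
    (((Matrix.of q.1)ᵀ * Matrix.of p.1 * Matrix.of q.1 : MatF m),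
      ((Matrix.of q.2)ᵀ * Matrix.of p.2 * Matrix.of q.2 : MatF m)) ∈ T

theorem primrecPred_transT (m : ℕ) (T : Finset (MatF m × MatF m)) :
    PrimrecPred fun x : (MatF m × MatF m) × (MatF m × MatF m) => transT m T x.1 x.2 := by
  have q1 : Primrec fun x : (MatF m × MatF m) × (MatF m × MatF m) => x.2.1 :=
    Primrec.fst.comp Primrec.snd
  have q2 : Primrec fun x : (MatF m × MatF m) × (MatF m × MatF m) => x.2.2 :=
    Primrec.snd.comp Primrec.snd
  have p1 : Primrec fun x : (MatF m × MatF m) × (MatF m × MatF m) => x.1.1 :=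
    Primrec.fst.comp Primrec.fst
  have p2 : Primrec fun x : (MatF m × MatF m) × (MatF m × MatF m) => x.1.2 :=
    Primrec.snd.comp Primrec.fst
  refine ((primrecPred_unit_det q1).and (primrecPred_unit_det q2)).and
    (primrecPred_finset_mem (β := MatF m × MatF m) T (Primrec.pair (β := MatF m) (γ := MatF m) ?_ ?_))
  · exact primrec_mat_mul (primrec_mat_mul (primrec_mat_transpose q1) p1) q1
  · exact primrec_mat_mul (primrec_mat_mul (primrec_mat_transpose q2) p2) q2

theorem mainP_computable (m : ℕ) :
    ComputablePred fun p : MatF m × MatF m => mainP m (Matrix.of p.1) (Matrix.of p.2) := by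
  classical
  obtain ⟨S, hS, hSV⟩ := finite_classes m 1
  have hSU : ∀ V : Matrix (Fin m) (Fin m) ℤ, V.IsSymm → IsUnit V.det →
      ∃ P : Matrix (Fin m) (Fin m) ℤ, IsUnit P.det ∧ Pᵀ * V * P ∈ S := by
    intro V h1 h2
    exact hSV V h1 h2.ne_zero (by rw [Int.isUnit_iff_abs_eq.1 h2]; rfl)
  let S' : Finset (MatF m) := hS.toFinset
  have hS' : ∀ W : MatF m, W ∈ S' ↔ W ∈ S := fun W => hS.mem_toFinset
  let T : Finset (MatF m × MatF m) :=
    (S' ×ˢ S').filter fun p => mainP m (Matrix.of p.1) (Matrix.of p.2)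
  let T' : Finset (MatF m × MatF m) :=
    (S' ×ˢ S').filter fun p => ¬ mainP m (Matrix.of p.1) (Matrix.of p.2)
  let good : MatF m × MatF m → Prop := fun p =>
    ((Matrix.of p.1).IsSymm ∧ (Matrix.of p.2).IsSymm) ∧
      (IsUnit (Matrix.of p.1).det ∧ IsUnit (Matrix.of p.2).det)
  have hgood : PrimrecPred good :=
    ((primrecPred_symm Primrec.fst).and (primrecPred_symm Primrec.snd)).and
      ((primrecPred_unit_det Primrec.fst).and (primrecPred_unit_det Primrec.snd))
  have hex : ∀ p, good p → ∃ q : MatF m × MatF m,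
      transT m T p q ∨ transT m T' p q := by
    rintro ⟨V, V'⟩ ⟨⟨h1, h2⟩, h3, h4⟩
    obtain ⟨P, hP, hPS⟩ := hSU _ h1 h3
    obtain ⟨Q, hQ, hQS⟩ := hSU _ h2 h4
    refine ⟨(P, Q), ?_⟩
    by_cases hm : mainP m (Pᵀ * Matrix.of V * P) (Qᵀ * Matrix.of V' * Q)
    · exact Or.inl ⟨⟨hP, hQ⟩, Finset.mem_filter.2
        ⟨Finset.mem_product.2 ⟨(hS' _).2 hPS, (hS' _).2 hQS⟩, hm⟩⟩
    · exact Or.inr ⟨⟨hP, hQ⟩, Finset.mem_filter.2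
        ⟨Finset.mem_product.2 ⟨(hS' _).2 hPS, (hS' _).2 hQS⟩, hm⟩⟩
  have hT : ∀ p q, transT m T p q → mainP m (Matrix.of p.1) (Matrix.of p.2) := by
    rintro ⟨V, V'⟩ ⟨P, Q⟩ ⟨⟨hP, hQ⟩, hm⟩
    exact (mainP_congr_iff hP hQ).1 (Finset.mem_filter.1 hm).2
  have hT' : ∀ p q, transT m T' p q → ¬ mainP m (Matrix.of p.1) (Matrix.of p.2) := by
    rintro ⟨V, V'⟩ ⟨P, Q⟩ ⟨⟨hP, hQ⟩, hm⟩ h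
    exact (Finset.mem_filter.1 hm).2 ((mainP_congr_iff hP hQ).2 h)
  have hmg : ∀ p : MatF m × MatF m, mainP m (Matrix.of p.1) (Matrix.of p.2) → good p :=
    fun p h => ⟨⟨h.1, h.2.1⟩, h.2.2.1, h.2.2.2.1⟩
  refine ComputablePred.computable_iff_re_compl_re'.2 ⟨?_, ?_⟩
  · refine (rePred_exists (primrecPred_transT m T)).of_eq fun p => ?_
    constructor
    · rintro ⟨q, hq⟩; exact hT p q hq
    · intro h
      obtain ⟨q, hq | hq⟩ := hex p (hmg p h)
      · exact ⟨q, hq⟩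
      · exact absurd h (hT' p q hq)
  · have hR : PrimrecPred fun x : (MatF m × MatF m) × (MatF m × MatF m) =>
        ¬ good x.1 ∨ transT m T' x.1 x.2 :=
      (hgood.comp Primrec.fst).not.or (primrecPred_transT m T')
    refine (rePred_exists (R := fun p q => ¬ good p ∨ transT m T' p q) hR).of_eq fun p => ?_
    constructor
    · rintro ⟨q, hq | hq⟩
      · exact fun h => hq (hmg p h)
      · exact hT' p q hq
    · intro h
      by_cases hg : good p
      · obtain ⟨q, hq | hq⟩ := hex p hg
        · exact absurd (hT p q hq) h
        · exact ⟨q, Or.inr hq⟩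
      · exact ⟨p, Or.inl hg⟩

/-- The predicate "two integer matrices are symmetric, unimodular, indefinite, and
congruent over `ℤ`" is computably decidable. -/
theorem computablePred_indefinite_congruent (m : ℕ) :
    ComputablePred fun p : (Fin m → Fin m → ℤ) × (Fin m → Fin m → ℤ) =>
      (Matrix.of p.1).IsSymm ∧ (Matrix.of p.2).IsSymm ∧
      IsUnit (Matrix.of p.1).det ∧ IsUnit (Matrix.of p.2).det ∧
      (∃ x : Fin m → ℝ, 0 < x ⬝ᵥ ((Matrix.of p.1).map ((↑) : ℤ → ℝ)).mulVec x) ∧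
      (∃ y : Fin m → ℝ, y ⬝ᵥ ((Matrix.of p.1).map ((↑) : ℤ → ℝ)).mulVec y < 0) ∧
      (∃ x : Fin m → ℝ, 0 < x ⬝ᵥ ((Matrix.of p.2).map ((↑) : ℤ → ℝ)).mulVec x) ∧
      (∃ y : Fin m → ℝ, y ⬝ᵥ ((Matrix.of p.2).map ((↑) : ℤ → ℝ)).mulVec y < 0) ∧
      ∃ P : Matrix (Fin m) (Fin m) ℤ, IsUnit P.det ∧
        Matrix.of p.2 = Pᵀ * Matrix.of p.1 * P := by
  exact mainP_computable m
end
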